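/- Let D be a cone metric on X, d the induced real-valued function, T : X → X a map, α ∈ (0,1), and x,y ∈ X. If there exists u ∈ {D(x,y), D(x,Tx), D(y,Ty), (1/2)·(D(x,Ty) + D(y,Tx))} such that D(Tx,Ty) ≤ α·u, then d(Tx,Ty) ≤ α·max{d(x,y), d(x,Tx), d(y,Ty), (1/2)·(d(x,Ty) + d(y,Tx))}. -/

import Mathlib

/-!
The induced function `d` is the infimum of `‖u‖` over the upper bounds `u` of `D`. If
`D a b ≤ β • D p q + γ • D r s` with `β, γ ≥ 0`, then upper bounds `u` of `D p q` and `v` of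
`D r s` combine to the upper bound `β • u + γ • v` of `D a b`, so the triangle inequality for the
norm gives `d a b ≤ β * d p q + γ * d r s` (`inducedDist_le_combo`). Each of the four possible
choices of `u` in the hypothesis is an instance of this estimate, and its right-hand side is at
most `α` times the maximum.
-/

open Filter Topology

/-- A cone in a real Banach space `E`. -/
structure IsCone (E : Type*) [NormedAddCommGroup E] [NormedSpace ℝ E] (P : Set E) : Prop where
  closed : IsClosed P
  nonempty : P.Nonempty
  ne_singleton_zero : P ≠ {0}
  combo_mem : ∀ a b : ℝ, 0 ≤ a → 0 ≤ b → ∀ x y : E, x ∈ P → y ∈ P → a • x + b • y ∈ P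
  eq_zero_of_mem_of_neg_mem : ∀ x : E, x ∈ P → -x ∈ P → x = 0

/-- `x ≤ y` with respect to the cone `P`, i.e. `y - x ∈ P`. -/
def coneLe {E : Type*} [NormedAddCommGroup E] (P : Set E) (x y : E) : Prop :=
  y - x ∈ P

/-- `x ≪ y` with respect to the cone `P`, i.e. `y - x ∈ interior P`. -/
def coneLt {E : Type*} [NormedAddCommGroup E] (P : Set E) (x y : E) : Prop :=
  y - x ∈ interior P

/-- `D : X × X → E` is a cone metric with respect to the cone `P`. -/
structure IsConeMetric {E : Type*} [NormedAddCommGroup E] (P : Set E)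
    {X : Type*} (D : X → X → E) : Prop where
  nonneg : ∀ x y : X, coneLe P 0 (D x y)
  eq_zero_iff : ∀ x y : X, (D x y = 0 ↔ x = y)
  symm : ∀ x y : X, D x y = D y x
  triangle : ∀ x y z : X, coneLe P (D x y) (D x z + D z y)

/-- The induced real-valued function `d(x,y) = inf {‖u‖ : D x y ≤ u}`. -/
noncomputable def inducedDist {E : Type*} [NormedAddCommGroup E] (P : Set E)
    {X : Type*} (D : X → X → E) (x y : X) : ℝ :=
  sInf {r : ℝ | ∃ u : E, r = ‖u‖ ∧ coneLe P (D x y) u}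

/-- The norm of any upper bound of `D a b` bounds `inducedDist` from above. -/
lemma inducedDist_le_norm {E X : Type*} [NormedAddCommGroup E] {P : Set E} {D : X → X → E}
    {a b : X} {u : E} (hu : coneLe P (D a b) u) : inducedDist P D a b ≤ ‖u‖ := by
  refine csInf_le ⟨0, ?_⟩ ⟨u, rfl, hu⟩
  rintro r ⟨v, rfl, -⟩
  exact norm_nonneg v

lemma exists_norm_lt_inducedDist_add {E X : Type*} [NormedAddCommGroup E] [NormedSpace ℝ E]
    {P : Set E} (hP : IsCone E P) (D : X → X → E) (a b : X) {ε : ℝ} (hε : 0 < ε) :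
    ∃ u : E, coneLe P (D a b) u ∧ ‖u‖ < inducedDist P D a b + ε := by
  -- `D a b` is an upper bound of itself, so the infimum is over a nonempty set.
  have hne : {r : ℝ | ∃ u : E, r = ‖u‖ ∧ coneLe P (D a b) u}.Nonempty := by
    obtain ⟨p, hp⟩ := hP.nonempty
    refine ⟨_, D a b, rfl, ?_⟩
    simpa [coneLe] using hP.combo_mem 0 0 le_rfl le_rfl p p hp hp
  obtain ⟨r, ⟨u, rfl, hu⟩, hlt⟩ := Real.lt_sInf_add_pos hne hε
  exact ⟨u, hu, hlt⟩

/-- `inducedDist` respects nonnegative combinations of two distances. -/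
lemma inducedDist_le_combo {E X : Type*} [NormedAddCommGroup E] [NormedSpace ℝ E]
    {P : Set E} (hP : IsCone E P) {D : X → X → E} {a b p q r s : X} {β γ : ℝ}
    (hβ : 0 ≤ β) (hγ : 0 ≤ γ) (h : coneLe P (D a b) (β • D p q + γ • D r s)) :
    inducedDist P D a b ≤ β * inducedDist P D p q + γ * inducedDist P D r s := by
  refine le_of_forall_pos_le_add fun ε hε => ?_
  have hpos : 0 < β + γ + 1 := by positivity
  -- With slack `δ = ε / (β + γ + 1)` in both bounds, the total error `(β + γ) * δ` is below `ε`.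
  obtain ⟨δ, hδ, hδε⟩ : ∃ δ : ℝ, 0 < δ ∧ (β + γ + 1) * δ = ε :=
    ⟨ε / (β + γ + 1), by positivity, by field_simp⟩
  obtain ⟨u, hu, hu'⟩ := exists_norm_lt_inducedDist_add hP D p q hδ
  obtain ⟨v, hv, hv'⟩ := exists_norm_lt_inducedDist_add hP D r s hδ
  have hle : coneLe P (D a b) (β • u + γ • v) := by
    have h1 := hP.combo_mem β γ hβ hγ _ _ hu hv
    have h2 := hP.combo_mem 1 1 zero_le_one zero_le_one _ _ h1 h
    unfold coneLe
    convert h2 using 1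
    module
  calc inducedDist P D a b ≤ ‖β • u + γ • v‖ := inducedDist_le_norm hle
    _ ≤ β * ‖u‖ + γ * ‖v‖ := by
      refine (norm_add_le _ _).trans_eq ?_
      rw [norm_smul_of_nonneg hβ, norm_smul_of_nonneg hγ]
    _ ≤ β * (inducedDist P D p q + δ) + γ * (inducedDist P D r s + δ) := by gcongr
    _ ≤ β * inducedDist P D p q + γ * inducedDist P D r s + ε := by
      rw [← hδε]
      linarith

/-- The case of a single distance in `inducedDist_le_combo`. -/
lemma inducedDist_le_mul {E X : Type*} [NormedAddCommGroup E] [NormedSpace ℝ E]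
    {P : Set E} (hP : IsCone E P) {D : X → X → E} {a b p q : X} {β : ℝ}
    (hβ : 0 ≤ β) (h : coneLe P (D a b) (β • D p q)) :
    inducedDist P D a b ≤ β * inducedDist P D p q := by
  have := inducedDist_le_combo hP (p := p) (q := q) (r := p) (s := q) hβ le_rfl
    (by simpa using h)
  simpa using this

theorem stmt14 {E X : Type*} [NormedAddCommGroup E] [NormedSpace ℝ E] [CompleteSpace E]
    [Nonempty X] (P : Set E) (hP : IsCone E P) (hPint : (interior P).Nonempty)
    (D : X → X → E) (hD : IsConeMetric P D) (T : X → X) (α : ℝ) (hα0 : 0 < α) (hα1 : α < 1)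
    (x y : X)
    (h : ∃ u ∈ ({D x y, D x (T x), D y (T y),
        (1 / 2 : ℝ) • (D x (T y) + D y (T x))} : Set E),
      coneLe P (D (T x) (T y)) (α • u)) :
    inducedDist P D (T x) (T y) ≤
      α * max (max (inducedDist P D x y) (inducedDist P D x (T x)))
        (max (inducedDist P D y (T y))
          ((1 / 2) * (inducedDist P D x (T y) + inducedDist P D y (T x)))) := by
  obtain ⟨u, hu, hle⟩ := h
  simp only [Set.mem_insert_iff, Set.mem_singleton_iff] at hu
  rcases hu with rfl | rfl | rfl | rfl
  · refine (inducedDist_le_mul hP hα0.le hle).trans ?_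
    gcongr
    exact (le_max_left _ _).trans (le_max_left _ _)
  · refine (inducedDist_le_mul hP hα0.le hle).trans ?_
    gcongr
    exact (le_max_right _ _).trans (le_max_left _ _)
  · refine (inducedDist_le_mul hP hα0.le hle).trans ?_
    gcongr
    exact (le_max_left _ _).trans (le_max_right _ _)
  · have hα2 : 0 ≤ α * (1 / 2) := by positivity
    rw [smul_smul, smul_add] at hle
    refine (inducedDist_le_combo hP hα2 hα2 hle).trans ?_
    rw [← mul_add, mul_assoc]
    gcongr
    exact (le_max_right _ _).trans (le_max_right _ _)
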